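/- The factor complexity of u_p = u(1^ω,(EERR)^ω) satisfies limsup_{n→∞} C(n)/n ≥ 4 + ((τ'+5)/(τ+5))·(2τ/(τ−1)), where τ = 7+4√3 and τ' = 7−4√3; in particular limsup C(n)/n ≥ 4.577. -/

import Mathlib

abbrev Word := List Bool

/-- The exchange antimorphism `E`: complement each letter and reverse. -/
def Ebar (w : Word) : Word := (w.map Bool.not).reverse

def IsPal (w : Word) : Prop := w.reverse = w
def IsEPal (w : Word) : Prop := Ebar w = w

open Classical in
lemma exists_minLength {Q : Word → Prop} (hex : ∃ v, Q v) :
    ∃ v, Q v ∧ ∀ v', Q v' → v.length ≤ v'.length := by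
  classical
  have h : ∃ n, ∃ v, Q v ∧ v.length = n := ⟨_, hex.choose, hex.choose_spec, rfl⟩
  obtain ⟨v, hv, hlen⟩ := Nat.find_spec h
  exact ⟨v, hv, fun v' hv' => by
    rw [hlen]; exact Nat.find_min' h ⟨v', hv', rfl⟩⟩

lemma pal_ext (w : Word) : ∃ v, w <+: v ∧ IsPal v :=
  ⟨w ++ w.reverse, List.prefix_append _ _, by simp [IsPal]⟩

lemma epal_ext (w : Word) : ∃ v, w <+: v ∧ IsEPal v :=
  ⟨w ++ Ebar w, List.prefix_append _ _, by
    simp [IsEPal, Ebar, List.map_reverse, List.map_map, Function.comp_def, Bool.not_not]⟩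

/-- The palindromic closure: the shortest palindrome having `w` as a prefix. -/
noncomputable def palCl (w : Word) : Word := (exists_minLength (pal_ext w)).choose

/-- The pseudopalindromic closure: the shortest `E`-palindrome having `w` as a prefix. -/
noncomputable def epalCl (w : Word) : Word := (exists_minLength (epal_ext w)).choose

/-- Prefixes of the generalized pseudostandard word `u(1^ω, (EERR)^ω)`
(the letter `1` is `true`). -/
noncomputable def wp : ℕ → Word
  | 0 => []
  | n+1 => if (n+1) % 4 = 1 ∨ (n+1) % 4 = 2
           then epalCl (wp n ++ [true])
           else palCl (wp n ++ [true])

/-- Factors of `u_p`. -/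
def FactorUp (v : Word) : Prop := ∃ n, v <:+: wp n

/-- Factor complexity of `u_p`. -/
noncomputable def Cp (n : ℕ) : ℕ := Set.ncard {v : Word | FactorUp v ∧ v.length = n}


namespace UP

def st : ℕ → ℕ × ℕ
  | 0 => (9, 3)
  | k+1 => (2 * (2 * (2 * (2 * (st k).1 + 3) - (st k).2) - 2) - (st k).1,
      2 * (2 * (st k).1 + 3) - (st k).2)

def sA (k : ℕ) : ℕ := (st k).1
def sP (k : ℕ) : ℕ := (st k).2
def sB (k : ℕ) : ℕ := 2 * sA k + 3
def sC (k : ℕ) : ℕ := 2 * sB k - sP k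
def sE (k : ℕ) : ℕ := 2 * sC k - 2

lemma sA0 : sA 0 = 9 := rfl
lemma sP0 : sP 0 = 3 := rfl
lemma sP_succ (k : ℕ) : sP (k+1) = sC k := rfl
lemma sA_succ' (k : ℕ) : sA (k+1) = 2 * sE k - sA k := rfl

lemma basic (k : ℕ) : 3 ≤ sP k ∧ sP k < sA k ∧ 9 ≤ sA k := by
  induction k with
  | zero => simp [sA0, sP0]
  | succ k ih =>
    rw [sP_succ, sA_succ']
    simp only [sE, sC, sB]
    omega

/-- all numeric relations at level k -/
lemma rel (k : ℕ) : 3 ≤ sP k ∧ sP k < sA k ∧ 9 ≤ sA k ∧ sB k = 2 * sA k + 3 ∧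
    sC k + sP k = 2 * sB k ∧ sE k + 2 = 2 * sC k ∧ sA (k+1) + sA k = 2 * sE k := by
  have := basic k
  have h1 : sB k = 2 * sA k + 3 := rfl
  have h2 : sC k = 2 * sB k - sP k := rfl
  have h3 : sE k = 2 * sC k - 2 := rfl
  have h4 := sA_succ' k
  refine ⟨?_, ?_, ?_, ?_, ?_, ?_, ?_⟩ <;> omega

lemma sA_mono {j k : ℕ} (h : j ≤ k) : sA j ≤ sA k := by
  induction h with
  | refl => exact le_rfl
  | @step k h ih => have := rel k; show sA j ≤ sA (k+1); omega

lemma sA_ge (k : ℕ) : k + 9 ≤ sA k := by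
  induction k with
  | zero => simp [sA0]
  | succ k ih => have := rel k; omega

def X1 (D : List Bool) : List Bool := D ++ ([false, true, false] ++ D)
def ov (p : ℕ) (D : List Bool) : List Bool := D ++ D.drop p

def Dl : ℕ → List Bool
  | 0 => [true, true, true, true, false, true, true, true, true]
  | k+1 => ov (sA k) (ov 2 (ov (sP k) (X1 (Dl k))))

lemma Dl_len (k : ℕ) : (Dl k).length = sA k := by
  induction k with
  | zero => rfl
  | succ k ih =>
    have := rel k
    simp only [Dl, ov, X1, List.length_append, List.length_drop, ih, List.length_cons,
      List.length_nil]
    omega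

lemma ov_pre (p : ℕ) (D : List Bool) : D <+: ov p D := List.prefix_append _ _
lemma X1_pre (D : List Bool) : D <+: X1 D := List.prefix_append _ _

lemma pre3 (k : ℕ) : ov 2 (ov (sP k) (X1 (Dl k))) <+: Dl (k+1) := ov_pre _ _
lemma pre2 (k : ℕ) : ov (sP k) (X1 (Dl k)) <+: Dl (k+1) := (ov_pre _ _).trans (pre3 k)
lemma pre1 (k : ℕ) : X1 (Dl k) <+: Dl (k+1) := (ov_pre _ _).trans (pre2 k)
lemma pre0 (k : ℕ) : Dl k <+: Dl (k+1) := (X1_pre _).trans (pre1 k)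

lemma Dl_mono {j k : ℕ} (h : j ≤ k) : Dl j <+: Dl k := by
  induction h with
  | refl => exact List.prefix_refl _
  | @step k h ih => exact ih.trans (pre0 k)

def d (i : ℕ) : Bool := ((Dl i)[i]?).getD false

lemma pre_get {X Y : List Bool} (h : X <+: Y) {i : ℕ} (hi : i < X.length) : Y[i]? = X[i]? := by
  obtain ⟨Z, rfl⟩ := h
  rw [List.getElem?_append_left hi]

lemma d_get {k i : ℕ} {X : List Bool} (h : X <+: Dl k) (hi : i < X.length) :
    X[i]?.getD false = d i := by
  have hi' : i < (Dl i).length := by rw [Dl_len]; have := sA_ge i; omega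
  rw [← pre_get h hi, d]
  rcases le_total i k with hk | hk
  · rw [pre_get (Dl_mono hk) hi']
  · rw [pre_get (Dl_mono hk)]
    have := h.length_le; omega

lemma d_base (i : ℕ) (hi : i < 9) : d i = ((Dl 0)[i]?).getD false :=
  (d_get (k := 0) (List.prefix_refl _) (by rw [Dl_len]; exact hi)).symm

lemma ov_get {p k : ℕ} {D : List Bool} (h : ov p D <+: Dl k) (hp : p ≤ D.length) {i : ℕ}
    (hi : i < D.length - p) : d (D.length + i) = d (p + i) := by
  rw [← d_get h (i := D.length + i) (by simp [ov]; omega),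
    ← d_get ((ov_pre p D).trans h) (i := p + i) (by omega)]
  simp only [ov]
  rw [List.getElem?_append_right (by omega)]
  simp

lemma len1 (k : ℕ) : (X1 (Dl k)).length = sB k := by
  have := rel k
  simp [X1, Dl_len]; omega
lemma len2 (k : ℕ) : (ov (sP k) (X1 (Dl k))).length = sC k := by
  have := rel k
  simp only [ov, List.length_append, List.length_drop, len1]; omega
lemma len3 (k : ℕ) : (ov 2 (ov (sP k) (X1 (Dl k)))).length = sE k := by
  have := rel k
  rw [ov]
  simp only [List.length_append, List.length_drop, len2]; omega

lemma F2 (k i : ℕ) (hi : i < sB k - sP k) : d (sB k + i) = d (sP k + i) := by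
  have := rel k
  have h := ov_get (pre2 k) (by rw [len1]; omega) (i := i) (by rw [len1]; omega)
  rwa [len1] at h
lemma F3 (k i : ℕ) (hi : i < sC k - 2) : d (sC k + i) = d (2 + i) := by
  have := rel k
  have h := ov_get (pre3 k) (by rw [len2]; omega) (i := i) (by rw [len2]; omega)
  rwa [len2] at h
lemma F4 (k i : ℕ) (hi : i < sE k - sA k) : d (sE k + i) = d (sA k + i) := by
  have := rel k
  have h := ov_get (k := k+1) (List.prefix_refl _) (by rw [len3]; omega) (i := i) (by rw [len3]; omega)
  rwa [len3] at h
lemma F1 (k i : ℕ) (hi : i < sA k) : d (sA k + 3 + i) = d i := by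
  have := rel k
  rw [← d_get (pre1 k) (i := sA k + 3 + i) (by rw [len1]; omega),
    ← d_get (pre0 k) (i := i) (by rw [Dl_len]; omega), X1,
    List.getElem?_append_right (by rw [Dl_len]; omega), Dl_len]
  rw [List.getElem?_append_right (by simp; omega)]
  congr 2
  simp; omega
lemma F1a (k i : ℕ) (hi : i < 3) : d (sA k + i) = ([false, true, false][i]?).getD false := by
  have := rel k
  rw [← d_get (pre1 k) (i := sA k + i) (by rw [len1]; omega), X1,
    List.getElem?_append_right (by rw [Dl_len]; omega), Dl_len]
  rw [List.getElem?_append_left (by simp; omega)]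
  simp
lemma dA (k : ℕ) : d (sA k) = false := F1a k 0 (by omega)
lemma dA1 (k : ℕ) : d (sA k + 1) = true := F1a k 1 (by omega)
lemma dA2 (k : ℕ) : d (sA k + 2) = false := F1a k 2 (by omega)
lemma d0 : d 0 = true := d_base 0 (by omega)
lemma d1 : d 1 = true := d_base 1 (by omega)
lemma d2 : d 2 = true := d_base 2 (by omega)
lemma d3 : d 3 = true := d_base 3 (by omega)
lemma d4 : d 4 = false := d_base 4 (by omega)
lemma d5 : d 5 = true := d_base 5 (by omega)
lemma d6 : d 6 = true := d_base 6 (by omega)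
lemma d7 : d 7 = true := d_base 7 (by omega)
lemma d8 : d 8 = true := d_base 8 (by omega)

lemma dC (k : ℕ) : d (sC k) = true := by
  have := rel k
  rw [← d2]; exact F3 k 0 (by omega)
lemma dP (k : ℕ) : d (sP k) = true := by
  cases k with
  | zero => exact d3
  | succ k => rw [sP_succ]; exact dC k
lemma dB (k : ℕ) : d (sB k) = true := by
  have := rel k
  rw [← dP k]; exact F2 k 0 (by omega)
lemma dE (k : ℕ) : d (sE k) = false := by
  have := rel k
  rw [← dA k]; exact F4 k 0 (by omega)

def Pal (q : ℕ) : Prop := ∀ i j, i + j + 1 = q → d i = d j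

lemma pal_step {p q : ℕ} (hp : Pal p) (hq : Pal q) (hpq : p ≤ q)
    (h : ∀ i, i < q - p → d (q + i) = d (p + i)) : Pal (2 * q - p) := by
  have key : ∀ i j, i + j + 1 = 2 * q - p → q ≤ i → d i = d j := by
    intro i j hij hi
    have h1 := h (i - q) (by omega)
    rw [show q + (i - q) = i by omega] at h1
    rw [h1]; exact hq _ _ (by omega)
  intro i j hij
  by_cases hi : q ≤ i
  · exact key i j hij hi
  by_cases hj : q ≤ j
  · exact (key j i (by omega) hj).symm
  rw [hq i (q - 1 - i) (by omega), hq j (q - 1 - j) (by omega)]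
  exact hp _ _ (by omega)

lemma shift_of {p q : ℕ} (hp : Pal p) (hq : Pal q) (hpq : p ≤ q)
    (h : ∀ i, i < q - p → d (q + i) = d (p + i)) (i : ℕ) (hi : i < q) : d (q - p + i) = d i := by
  by_cases hip : i < p
  · rw [hq (q - p + i) (p - 1 - i) (by omega)]; exact hp _ _ (by omega)
  · have h1 := h (i - p) (by omega)
    rw [show q - p + i = q + (i - p) by omega, h1]; congr 1; omega

lemma pal_small {q : ℕ} (hq : q ≤ 4) : Pal q := by
  intro i j hij
  have : i < 4 := by omega
  have : j < 4 := by omega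
  interval_cases i <;> interval_cases j <;> simp [d0, d1, d2, d3]

lemma palB_of {k : ℕ} (hA : Pal (sA k)) : Pal (sB k) := by
  have := rel k
  have key : ∀ i j, i + j + 1 = sB k → sA k + 3 ≤ i → d i = d j := by
    intro i j hij hi
    have h1 := F1 k (i - (sA k + 3)) (by omega)
    rw [show sA k + 3 + (i - (sA k + 3)) = i by omega] at h1
    rw [h1]; exact hA _ _ (by omega)
  intro i j hij
  by_cases hi : sA k + 3 ≤ i
  · exact key i j hij hi
  by_cases hj : sA k + 3 ≤ j
  · exact (key j i (by omega) hj).symm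
  have : i = sA k ∨ i = sA k + 1 ∨ i = sA k + 2 := by omega
  rcases this with h | h | h
  · rw [show j = sA k + 2 by omega, h, dA, dA2]
  · rw [show j = sA k + 1 by omega, h]
  · rw [show j = sA k by omega, h, dA, dA2]

lemma pal_all (k : ℕ) : Pal (sA k) ∧ Pal (sP k) ∧ Pal (sB k) ∧ Pal (sC k) ∧ Pal (sE k) := by
  have main : ∀ k, Pal (sA k) → Pal (sP k) → Pal (sB k) ∧ Pal (sC k) ∧ Pal (sE k) ∧
      Pal (sA (k+1)) := by
    intro k hA hP
    have := rel k
    have hB := palB_of hA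
    have hC : Pal (sC k) := pal_step (p := sP k) (q := sB k) hP hB (by omega) (F2 k)
    have hE : Pal (sE k) := pal_step (p := 2) (q := sC k) (pal_small (by omega)) hC (by omega) (F3 k)
    exact ⟨hB, hC, hE, pal_step (p := sA k) (q := sE k) hA hE (by omega) (F4 k)⟩
  induction k with
  | zero =>
    have hA : Pal (sA 0) := by
      intro i j hij
      rw [sA0] at hij
      have : i < 9 := by omega
      obtain rfl : j = 8 - i := by omega
      interval_cases i <;> simp [d0, d1, d2, d3, d4, d5, d6, d7, d8]
    have hP : Pal (sP 0) := pal_small (by simp [sP0])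
    have := main 0 hA hP
    tauto
  | succ k ih =>
    have h1 := main k ih.1 ih.2.1
    have hP : Pal (sP (k+1)) := by rw [sP_succ]; tauto
    have := main (k+1) h1.2.2.2 hP
    tauto

lemma palA (k : ℕ) : Pal (sA k) := (pal_all k).1
lemma palP (k : ℕ) : Pal (sP k) := (pal_all k).2.1
lemma palB (k : ℕ) : Pal (sB k) := (pal_all k).2.2.1
lemma palC (k : ℕ) : Pal (sC k) := (pal_all k).2.2.2.1
lemma palE (k : ℕ) : Pal (sE k) := (pal_all k).2.2.2.2

lemma S2 (k i : ℕ) (hi : i < sB k) : d (sB k - sP k + i) = d i := by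
  have := rel k
  exact shift_of (palP k) (palB k) (by omega) (F2 k) i hi
lemma S3 (k i : ℕ) (hi : i < sC k) : d (sC k - 2 + i) = d i := by
  have := rel k
  exact shift_of (p := 2) (q := sC k) (pal_small (by omega)) (palC k) (by omega) (F3 k) i hi
lemma S4 (k i : ℕ) (hi : i < sE k) : d (sE k - sA k + i) = d i := by
  have := rel k
  exact shift_of (palA k) (palE k) (by omega) (F4 k) i hi
lemma refl_step {m q : ℕ} (hm : Pal m) (h : ∀ i j, i + j + 1 = q → i ≤ m → j ≤ m → d i = d j)
    (h1 : m < q) (h2 : q ≤ 2 * m) : Pal (2 * m - q) ∧ d (2 * m - q) = d m := by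
  constructor
  · intro i j hij
    rw [hm i (m - 1 - i) (by omega), hm j (m - 1 - j) (by omega)]
    exact h _ _ (by omega) (by omega) (by omega)
  · rw [h m (q - 1 - m) (by omega) (by omega) (by omega)]
    exact hm _ _ (by omega)

lemma refl_ext {m q : ℕ} (hm : Pal m) (hq : Pal q) (h1 : m < q) (h2 : q ≤ 2 * m)
    (i : ℕ) (hi : i < q - m) : d (2 * m - q + i) = d (m + i) := by
  rw [hq (m + i) (q - 1 - (m + i)) (by omega)]
  exact hm _ _ (by omega)

def IsL (q : ℕ) : Prop := q ≤ 4 ∨ ∃ k, q = sA k ∨ q = sB k ∨ q = sC k ∨ q = sE k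

lemma locate (q : ℕ) (hq : 9 < q) : ∃ k, sA k < q ∧ q ≤ sA (k+1) := by
  have hex : ∃ k, q ≤ sA k := ⟨q, by have := sA_ge q; omega⟩
  classical
  have h1 := Nat.find_spec hex
  have h2 : Nat.find hex ≠ 0 := by
    intro h; rw [h, sA0] at h1; omega
  obtain ⟨k, hk⟩ := Nat.exists_eq_succ_of_ne_zero h2
  refine ⟨k, ?_, ?_⟩
  · have := Nat.find_min hex (m := k) (by omega); omega
  · rw [hk] at h1; exact h1

lemma tri (j k : ℕ) : sA (j+1) ≤ sA k ∨ j = k ∨ sA (k+1) ≤ sA j := by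
  rcases lt_trichotomy j k with h | h | h
  · exact Or.inl (sA_mono h)
  · exact Or.inr (Or.inl h)
  · exact Or.inr (Or.inr (sA_mono h))

lemma d2P (k : ℕ) : d (2 * sP k - 2) = false := by
  cases k with
  | zero => exact d4
  | succ k => rw [sP_succ]; exact dE k

lemma pal_class (q : ℕ) : Pal q → IsL q := by
  induction q using Nat.strong_induction_on with
  | _ q ih =>
  intro hq
  by_cases h9 : q ≤ 9
  · by_cases h4 : q ≤ 4
    · exact Or.inl h4
    have : q = 5 ∨ q = 6 ∨ q = 7 ∨ q = 8 ∨ q = 9 := by omega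
    rcases this with rfl | rfl | rfl | rfl | rfl
    · have := hq 0 4 rfl; simp [d0, d4] at this
    · have := hq 1 4 rfl; simp [d1, d4] at this
    · have := hq 2 4 rfl; simp [d2, d4] at this
    · have := hq 3 4 rfl; simp [d3, d4] at this
    · exact Or.inr ⟨0, Or.inl rfl⟩
  obtain ⟨k, hk1, hk2⟩ := locate q (by omega)
  have hr := rel k
  by_cases hB : q < sB k
  · exfalso
    by_cases h2 : q ≤ 2 * sA k
    · have hs := refl_step (palA k) (fun i j h _ _ => hq i j h) hk1 h2
      have he := refl_ext (palA k) hq hk1 h2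
      have hl := ih _ (by omega) hs.1
      have hd := hs.2
      generalize hq' : 2 * sA k - q = q' at *
      rw [dA] at hd
      rcases hl with h | ⟨j, h | h | h | h⟩
      · have : q' = 0 ∨ q' = 1 ∨ q' = 2 ∨ q' = 3 ∨ q' = 4 := by omega
        rcases this with h | h | h | h | h
        · rw [h, d0] at hd; simp at hd
        · rw [h, d1] at hd; simp at hd
        · rw [h, d2] at hd; simp at hd
        · rw [h, d3] at hd; simp at hd
        · have := he 2 (by omega)
          rw [h, dA2, d6] at this; simp at this
      · have ht := tri j k
        have hrj := rel j
        have hlt : sA (j+1) ≤ sA k := by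
          rcases ht with h | rfl | h <;> omega
        have := he (3 + sA j) (by omega)
        rw [show sA k + (3 + sA j) = sA k + 3 + sA j by omega, F1 k _ (by omega), dA,
          show q' + (3 + sA j) = sB j by omega, dB] at this
        simp at this
      · rw [h, dB] at hd; simp at hd
      · rw [h, dC] at hd; simp at hd
      · have ht := tri j k
        have hrj := rel j
        have hlt : sA (j+1) ≤ sA k := by
          rcases ht with h | rfl | h <;> omega
        have := he (3 + sA j) (by omega)
        rw [show sA k + (3 + sA j) = sA k + 3 + sA j by omega, F1 k _ (by omega), dA, h,
          F4 j _ (by omega), show sA j + (3 + sA j) = sB j by omega, dB] at this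
        simp at this
    · have : q = 2 * sA k + 1 ∨ q = 2 * sA k + 2 := by omega
      rcases this with h | h
      · have e1 := hq (sA k + 2) (sA k - 2) (by omega)
        rw [palA k (sA k - 2) 1 (by omega), dA2, d1] at e1
        simp at e1
      · have e1 := hq (sA k + 2) (sA k - 1) (by omega)
        rw [palA k (sA k - 1) 0 (by omega), dA2, d0] at e1
        simp at e1
  by_cases hB' : q = sB k
  · exact Or.inr ⟨k, by tauto⟩
  by_cases hC : q < sC k
  · exfalso
    have hs := refl_step (palB k) (fun i j h _ _ => hq i j h) (by omega) (by omega)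
    have hl := ih _ (by omega) hs.1
    have hd := hs.2
    generalize hq' : 2 * sB k - q = q' at *
    rw [dB] at hd
    have hPq : sP k < q' := by omega
    rcases hl with h | ⟨j, h | h | h | h⟩
    · have : q' = 4 := by omega
      rw [this, d4] at hd; simp at hd
    · rw [h, dA] at hd; simp at hd
    · have ht := tri j k
      have hrj := rel j
      rcases ht with h' | rfl | h'
      · cases k with
        | zero => rw [sA0] at h'; omega
        | succ k =>
          rw [sP_succ] at hPq
          have hrk := rel k
          rcases tri j k with h'' | rfl | h'' <;> omega
      · omega
      · omega
    · have ht := tri j k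
      have hrj := rel j
      rcases ht with h' | rfl | h'
      · cases k with
        | zero => rw [sA0] at h'; omega
        | succ k =>
          rw [sP_succ] at hPq
          have hrk := rel k
          rcases tri j k with h'' | rfl | h'' <;> omega
      · omega
      · omega
    · rw [h, dE] at hd; simp at hd
  by_cases hC' : q = sC k
  · exact Or.inr ⟨k, by tauto⟩
  by_cases hE : q < sE k
  · exfalso
    have hs := refl_step (palC k) (fun i j h _ _ => hq i j h) (by omega) (by omega)
    have he := refl_ext (palC k) hq (by omega) (by omega)
    have hl := ih _ (by omega) hs.1
    have hd := hs.2
    generalize hq' : 2 * sC k - q = q' at *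
    rw [dC] at hd
    have he' : ∀ i, i < q - sC k → d (q' + i) = d (2 + i) := by
      intro i hi
      rw [he i hi, F3 k i (by omega)]
    rcases hl with h | ⟨j, h | h | h | h⟩
    · have : q' = 3 ∨ q' = 4 := by omega
      rcases this with h | h
      · have := he' 1 (by omega)
        rw [h, d4, d3] at this; simp at this
      · rw [h, d4] at hd; simp at hd
    · rw [h, dA] at hd; simp at hd
    · have hrj := rel j
      have hlt : sB j ≤ sB k := by
        rcases tri j k with h | rfl | h <;> omega
      have := he' (sP j - 2) (by rcases tri j k with h | rfl | h <;> omega)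
      rw [show 2 + (sP j - 2) = sP j by omega, dP, h, F2 j _ (by omega),
        show sP j + (sP j - 2) = 2 * sP j - 2 by omega, d2P] at this
      simp at this
    · have hrj := rel j
      have hlt : sA (j+1) ≤ sA k := by
        rcases tri j k with h | rfl | h <;> omega
      have := he' (sC j - 2) (by omega)
      rw [show 2 + (sC j - 2) = sC j by omega, dC,
        show q' + (sC j - 2) = sE j by omega, dE] at this
      simp at this
    · rw [h, dE] at hd; simp at hd
  by_cases hE' : q = sE k
  · exact Or.inr ⟨k, by tauto⟩
  by_cases hA : q < sA (k+1)
  · exfalso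
    have hs := refl_step (palE k) (fun i j h _ _ => hq i j h) (by omega) (by omega)
    have hl := ih _ (by omega) hs.1
    have hd := hs.2
    generalize hq' : 2 * sE k - q = q' at *
    rw [dE] at hd
    rcases hl with h | ⟨j, h | h | h | h⟩
    · omega
    · have hrj := rel j
      rcases tri j k with h' | rfl | h' <;> omega
    · rw [h, dB] at hd; simp at hd
    · rw [h, dC] at hd; simp at hd
    · have hrj := rel j
      rcases tri j k with h' | rfl | h' <;> omega
  · exact Or.inr ⟨k+1, by left; omega⟩

def u : ℕ → Bool
  | 0 => true
  | i+1 => xor (u i) (d i)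

lemma u_succ (i : ℕ) : u (i+1) = xor (u i) (d i) := rfl

lemma d_eq (i : ℕ) : d i = xor (u i) (u (i+1)) := by
  rw [u_succ]; cases u i <;> cases d i <;> rfl

lemma u_pal {m : ℕ} (hm : Pal m) : ∀ i j, i + j = m → xor (u i) (u j) = !(u m) := by
  intro i
  induction i with
  | zero => intro j hj; rw [← hj]; simp [u]
  | succ i ih =>
    intro j hj
    have h1 := ih (j+1) (by omega)
    rw [u_succ] at h1 ⊢
    rw [hm i j (by omega)]
    rw [← h1]
    cases u i <;> cases u j <;> cases d j <;> rfl

lemma u_step {p q : ℕ} (hp : p ≤ q) (hq : Pal q) (hr : Pal (2 * q - p)) : u (2 * q - p) = u p := by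
  have h1 := u_pal hq p (q - p) (by omega)
  have h2 := u_pal hr (q - p) q (by omega)
  revert h1 h2
  cases u (2 * q - p) <;> cases u p <;> cases u q <;> cases u (q - p) <;> simp

lemma u0 : u 0 = true := rfl
lemma u1 : u 1 = false := by rw [u_succ, u0, d0]; rfl
lemma u2 : u 2 = true := by rw [u_succ, u1, d1]; rfl
lemma u3 : u 3 = false := by rw [u_succ, u2, d2]; rfl
lemma u4 : u 4 = true := by rw [u_succ, u3, d3]; rfl
lemma u5 : u 5 = true := by rw [u_succ, u4, d4]; rfl
lemma u6 : u 6 = false := by rw [u_succ, u5, d5]; rfl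
lemma u7 : u 7 = true := by rw [u_succ, u6, d6]; rfl
lemma u8 : u 8 = false := by rw [u_succ, u7, d7]; rfl
lemma u9 : u 9 = true := by rw [u_succ, u8, d8]; rfl

lemma u_all (k : ℕ) : u (sA k) = true ∧ u (sP k) = false ∧ u (sB k) = false ∧ u (sC k) = false ∧
    u (sE k) = true := by
  have main : ∀ k, u (sA k) = true → u (sP k) = false → u (sB k) = false ∧ u (sC k) = false ∧
      u (sE k) = true ∧ u (sA (k+1)) = true := by
    intro k hA hP
    have hr := rel k
    have h1 : u (sA k + 1) = true := by rw [u_succ, hA, dA]; rfl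
    have h2 : u (sA k + 2) = false := by rw [u_succ, h1, dA1]; rfl
    have hB := u_pal (palB k) (sA k + 1) (sA k + 2) (by omega)
    rw [h1, h2] at hB
    have hB' : u (sB k) = false := by simpa using hB
    have hC : u (sC k) = u (sP k) := u_step (p := sP k) (q := sB k) (by omega) (palB k) (palC k)
    have hE : u (sE k) = u 2 := u_step (p := 2) (q := sC k) (by omega) (palC k) (palE k)
    have hA' : u (sA (k+1)) = u (sA k) :=
      u_step (p := sA k) (q := sE k) (by omega) (palE k) (palA (k+1))
    rw [hC, hE, hA', u2]
    exact ⟨hB', hP, rfl, hA⟩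
  induction k with
  | zero =>
    have := main 0 u9 u3
    exact ⟨u9, u3, this.1, this.2.1, this.2.2.1⟩
  | succ k ih =>
    have h1 := main k ih.1 ih.2.1
    have h2 := main (k+1) h1.2.2.2 (by rw [sP_succ]; exact h1.2.1)
    exact ⟨h1.2.2.2, by rw [sP_succ]; exact h1.2.1, h2.1, h2.2.1, h2.2.2.1⟩

lemma uA (k : ℕ) : u (sA k) = true := (u_all k).1
lemma uB (k : ℕ) : u (sB k) = false := (u_all k).2.2.1
lemma uC (k : ℕ) : u (sC k) = false := (u_all k).2.2.2.1
lemma uE (k : ℕ) : u (sE k) = true := (u_all k).2.2.2.2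
lemma uA1 (k : ℕ) : u (sA k + 1) = true := by rw [u_succ, uA, dA]; rfl
lemma uB1 (k : ℕ) : u (sB k + 1) = true := by rw [u_succ, uB, dB]; rfl
lemma uC1 (k : ℕ) : u (sC k + 1) = true := by rw [u_succ, uC, dC]; rfl
lemma uE1 (k : ℕ) : u (sE k + 1) = true := by rw [u_succ, uE, dE]; rfl
def pref (n : ℕ) : List Bool := (List.range n).map u

lemma pref_len (n : ℕ) : (pref n).length = n := by simp [pref]
lemma pref_get {n i : ℕ} (h : i < n) : (pref n)[i]? = some (u i) := by
  simp [pref, h]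
lemma pref_succ (n : ℕ) : pref (n+1) = pref n ++ [u n] := by
  simp [pref, List.range_succ]
lemma pref_prefix {m n : ℕ} (h : m ≤ n) : pref m <+: pref n := by
  induction h with
  | refl => exact List.prefix_refl _
  | @step n h ih => exact ih.trans (by rw [pref_succ]; exact List.prefix_append _ _)

lemma pal_iff (v : List Bool) : IsPal v ↔ ∀ i j, i + j + 1 = v.length →
    v[i]?.getD false = xor (v[j]?.getD false) false := by
  constructor
  · intro h i j hij
    have : v[i]? = v[j]? := by
      conv_lhs => rw [← h]
      rw [List.getElem?_reverse (by omega)]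
      congr 1; omega
    rw [this]; simp
  · intro h
    apply List.ext_getElem (by simp)
    intro i h1 h2
    have := h (v.length - 1 - i) i (by omega)
    rw [List.getElem_reverse]
    simpa [List.getElem?_eq_getElem, h2, show v.length - 1 - i < v.length by omega] using this

lemma epal_iff (v : List Bool) : IsEPal v ↔ ∀ i j, i + j + 1 = v.length →
    v[i]?.getD false = xor (v[j]?.getD false) true := by
  constructor
  · intro h i j hij
    have : v[i]? = (v[j]?).map Bool.not := by
      conv_lhs => rw [← h]
      rw [Ebar, List.getElem?_reverse (by simp; omega), List.getElem?_map]
      congr 2; simp; omega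
    rw [this, List.getElem?_eq_getElem (show j < v.length by omega)]; simp
  · intro h
    apply List.ext_getElem (by simp [Ebar])
    intro i h1 h2
    have := h i (v.length - 1 - i) (by omega)
    simp only [Ebar, List.getElem_reverse, List.getElem_map, List.length_map]
    rw [List.getElem?_eq_getElem h2, List.getElem?_eq_getElem (by omega)] at this
    simpa using this.symm

lemma cl_gen (θ : Bool) {M N : ℕ} (h2 : N ≤ 2 * M) (v : List Bool)
    (hE : ∀ i j, i + j + 1 = N → u i = xor (u j) θ)
    (hmin : ∀ t, M ≤ t → t < N →
      (∀ i j, i + j + 1 = t → i < M → j < M → u i = xor (u j) θ) → False)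
    (hv : pref M <+: v)
    (hvp : ∀ i j, i + j + 1 = v.length → v[i]?.getD false = xor (v[j]?.getD false) θ)
    (hvl : v.length ≤ N) : v = pref N := by
  have hf : ∀ i, i < M → v[i]?.getD false = u i := by
    intro i hi
    rw [pre_get hv (by rw [pref_len]; exact hi), pref_get hi]; rfl
  have hM : M ≤ v.length := by have := hv.length_le; rwa [pref_len] at this
  have hN : v.length = N := by
    by_contra hne
    apply hmin v.length hM (by omega)
    intro i j hij hi hj
    rw [← hf i hi, ← hf j hj]; exact hvp i j hij
  apply List.ext_getElem? 
  intro i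
  by_cases hi : i < N
  · rw [pref_get hi]
    have hi' : i < v.length := by omega
    have : v[i]?.getD false = u i := by
      by_cases hiM : i < M
      · exact hf i hiM
      · rw [hvp i (N - 1 - i) (by omega), hf _ (by omega), ← hE i _ (by omega)]
    rw [List.getElem?_eq_getElem hi'] at this ⊢
    simpa using this
  · rw [List.getElem?_eq_none (by omega), List.getElem?_eq_none (by rw [pref_len]; omega)]

lemma pref_getD {n i : ℕ} (h : i < n) : (pref n)[i]?.getD false = u i := by
  rw [pref_get h]; rfl

lemma pal_cl {M N : ℕ} (h1 : M ≤ N) (h2 : N ≤ 2 * M)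
    (hE : ∀ i j, i + j + 1 = N → u i = xor (u j) false)
    (hmin : ∀ t, M ≤ t → t < N →
      (∀ i j, i + j + 1 = t → i < M → j < M → u i = xor (u j) false) → False) :
    palCl (pref M) = pref N := by
  have hs := (exists_minLength (pal_ext (pref M))).choose_spec
  have hl := hs.2 (pref N) ⟨pref_prefix h1, by
    rw [pal_iff, pref_len]; intro i j hij
    rw [pref_getD (by omega), pref_getD (by omega)]; exact hE i j hij⟩
  rw [pref_len] at hl
  exact cl_gen false h2 _ hE hmin hs.1.1 ((pal_iff _).1 hs.1.2) hl

lemma epal_cl {M N : ℕ} (h1 : M ≤ N) (h2 : N ≤ 2 * M)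
    (hE : ∀ i j, i + j + 1 = N → u i = xor (u j) true)
    (hmin : ∀ t, M ≤ t → t < N →
      (∀ i j, i + j + 1 = t → i < M → j < M → u i = xor (u j) true) → False) :
    epalCl (pref M) = pref N := by
  have hs := (exists_minLength (epal_ext (pref M))).choose_spec
  have hl := hs.2 (pref N) ⟨pref_prefix h1, by
    rw [epal_iff, pref_len]; intro i j hij
    rw [pref_getD (by omega), pref_getD (by omega)]; exact hE i j hij⟩
  rw [pref_len] at hl
  exact cl_gen true h2 _ hE hmin hs.1.1 ((epal_iff _).1 hs.1.2) hl

lemma ovl (θ : Bool) {m t : ℕ} (hm : Pal m) (h1 : m + 2 ≤ t) (h2 : t ≤ 2 * m + 1)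
    (h : ∀ i j, i + j + 1 = t → i < m + 2 → j < m + 2 → u i = xor (u j) θ) :
    IsL (2 * m + 1 - t) ∧ d (2 * m + 1 - t) = d m ∧ u (2 * m + 1 - t) = !θ := by
  have hd : ∀ i j, i + j + 1 = t - 1 → i ≤ m → j ≤ m → d i = d j := by
    intro i j hij hi hj
    rw [d_eq, d_eq, h i (j+1) (by omega) (by omega) (by omega),
      h (i+1) j (by omega) (by omega) (by omega)]
    cases u j <;> cases u (j+1) <;> cases θ <;> rfl
  have hs := refl_step hm hd (by omega) (by omega)
  rw [show 2 * m - (t - 1) = 2 * m + 1 - t by omega] at hs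
  refine ⟨pal_class _ hs.1, hs.2, ?_⟩
  have e1 := u_pal hm (2 * m + 1 - t) (t - 1 - m) (by omega)
  have e2 := h (t - 1 - m) m (by omega) (by omega) (by omega)
  rw [e2] at e1
  revert e1
  cases u (2 * m + 1 - t) <;> cases u m <;> cases θ <;> simp

lemma sym_of {m : ℕ} (hm : Pal m) (θ : Bool) (hu : u m = !θ) :
    ∀ i j, i + j + 1 = m + 1 → u i = xor (u j) θ := by
  intro i j hij
  have := u_pal hm i j (by omega)
  rw [hu] at this
  revert this
  cases u i <;> cases u j <;> cases θ <;> simp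

lemma stepB (k : ℕ) : epalCl (pref (sA k + 2)) = pref (sB k + 1) := by
  have hr := rel k
  apply epal_cl (by omega) (by omega) (sym_of (palB k) true (by rw [uB]; rfl))
  intro t ht1 ht2 h
  by_cases h3 : t ≤ 2 * sA k + 1
  · obtain ⟨hl, hd, hu⟩ := ovl true (palA k) ht1 h3 h
    generalize 2 * sA k + 1 - t = q at *
    rw [dA] at hd
    rcases hl with h | ⟨j, h | h | h | h⟩
    · interval_cases q <;> simp_all [d0, d1, d2, d3, u4]
    · rw [h, uA] at hu; simp at hu
    · rw [h, dB] at hd; simp at hd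
    · rw [h, dC] at hd; simp at hd
    · rw [h, uE] at hu; simp at hu
  · by_cases h4 : t = 2 * sA k + 2
    · have := h (sA k) (sA k + 1) (by omega) (by omega) (by omega)
      rw [uA, uA1] at this; simp at this
    · have := h (sA k + 1) (sA k + 1) (by omega) (by omega) (by omega)
      rw [uA1] at this; simp at this

lemma stepC (k : ℕ) : epalCl (pref (sB k + 2)) = pref (sC k + 1) := by
  have hr := rel k
  apply epal_cl (by omega) (by omega) (sym_of (palC k) true (by rw [uC]; rfl))
  intro t ht1 ht2 h
  obtain ⟨hl, hd, hu⟩ := ovl true (palB k) ht1 (by omega) h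
  generalize hq : 2 * sB k + 1 - t = q at *
  rw [dB] at hd
  have hPq : sP k < q := by omega
  rcases hl with h | ⟨j, h | h | h | h⟩
  · have : q = 4 := by omega
    rw [this, d4] at hd; simp at hd
  · rw [h, dA] at hd; simp at hd
  · have ht := tri j k
    have hrj := rel j
    rcases ht with h' | rfl | h'
    · cases k with
      | zero => rw [sA0] at h'; omega
      | succ k =>
        rw [sP_succ] at hPq
        have hrk := rel k
        rcases tri j k with h'' | rfl | h'' <;> omega
    · omega
    · omega
  · have ht := tri j k
    have hrj := rel j
    rcases ht with h' | rfl | h'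
    · cases k with
      | zero => rw [sA0] at h'; omega
      | succ k =>
        rw [sP_succ] at hPq
        have hrk := rel k
        rcases tri j k with h'' | rfl | h'' <;> omega
    · omega
    · omega
  · rw [h, dE] at hd; simp at hd

lemma stepE (k : ℕ) : palCl (pref (sC k + 2)) = pref (sE k + 1) := by
  have hr := rel k
  apply pal_cl (by omega) (by omega) (sym_of (palE k) false (by rw [uE]; rfl))
  intro t ht1 ht2 h
  obtain ⟨hl, hd, hu⟩ := ovl false (palC k) ht1 (by omega) h
  have hq2 : 2 < 2 * sC k + 1 - t := by omega
  generalize hq : 2 * sC k + 1 - t = q at *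
  rw [dC] at hd
  rcases hl with h | ⟨j, h | h | h | h⟩
  · have : q = 3 ∨ q = 4 := by omega
    rcases this with h | h
    · rw [h, u3] at hu; simp at hu
    · rw [h, d4] at hd; simp at hd
  · rw [h, dA] at hd; simp at hd
  · rw [h, uB] at hu; simp at hu
  · rw [h, uC] at hu; simp at hu
  · rw [h, dE] at hd; simp at hd

lemma stepA (k : ℕ) : palCl (pref (sE k + 2)) = pref (sA (k+1) + 1) := by
  have hr := rel k
  apply pal_cl (by omega) (by omega) (sym_of (palA (k+1)) false (by rw [uA]; rfl))
  intro t ht1 ht2 h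
  obtain ⟨hl, hd, hu⟩ := ovl false (palE k) ht1 (by omega) h
  generalize hq : 2 * sE k + 1 - t = q at *
  rw [dE] at hd
  rcases hl with h | ⟨j, h | h | h | h⟩
  · omega
  · have hrj := rel j
    rcases tri j k with h' | rfl | h' <;> omega
  · rw [h, dB] at hd; simp at hd
  · rw [h, dC] at hd; simp at hd
  · have hrj := rel j
    rcases tri j k with h' | rfl | h' <;> omega

lemma app_true {n : ℕ} (h : u n = true) : pref n ++ [true] = pref (n+1) := by
  rw [pref_succ, h]

lemma base1 : epalCl (pref 1) = pref 2 := by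
  apply epal_cl (by omega) (by omega)
  · intro i j hij
    have : i < 2 := by omega
    obtain rfl : j = 1 - i := by omega
    interval_cases i <;> simp [u0, u1]
  · intro t h1 h2 h
    have := h 0 0 (by omega) (by omega) (by omega)
    simp at this
lemma base2 : epalCl (pref 3) = pref 4 := by
  apply epal_cl (by omega) (by omega)
  · intro i j hij
    have : i < 4 := by omega
    obtain rfl : j = 3 - i := by omega
    interval_cases i <;> simp [u0, u1, u2, u3]
  · intro t h1 h2 h
    have := h 1 1 (by omega) (by omega) (by omega)
    simp at this
lemma base3 : palCl (pref 5) = pref 5 := by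
  apply pal_cl (by omega) (by omega)
  · intro i j hij
    have : i < 5 := by omega
    obtain rfl : j = 4 - i := by omega
    interval_cases i <;> simp [u0, u1, u2, u3, u4]
  · intro t h1 h2 h
    omega
lemma base4 : palCl (pref 6) = pref 10 := by
  apply pal_cl (by omega) (by omega)
  · exact sym_of (palA 0) false u9
  · intro t h1 h2 h
    have : t = 6 ∨ t = 7 ∨ t = 8 ∨ t = 9 := by omega
    rcases this with rfl | rfl | rfl | rfl
    · have := h 1 4 (by omega) (by omega) (by omega); simp [u1, u4] at this
    · have := h 1 5 (by omega) (by omega) (by omega); simp [u1, u5] at this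
    · have := h 3 4 (by omega) (by omega) (by omega); simp [u3, u4] at this
    · have := h 3 5 (by omega) (by omega) (by omega); simp [u3, u5] at this

lemma wp_e (n : ℕ) (h : (n+1) % 4 = 1 ∨ (n+1) % 4 = 2) : wp (n+1) = epalCl (wp n ++ [true]) := by
  rw [wp, if_pos h]
lemma wp_r (n : ℕ) (h : ¬ ((n+1) % 4 = 1 ∨ (n+1) % 4 = 2)) :
    wp (n+1) = palCl (wp n ++ [true]) := by
  rw [wp, if_neg h]

lemma wp0 : wp 0 = pref 0 := rfl
lemma wp1 : wp 1 = pref 2 := by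
  rw [wp_e 0 (by omega), wp0, app_true u0, base1]
lemma wp2 : wp 2 = pref 4 := by
  rw [wp_e 1 (by omega), wp1, app_true u2, base2]
lemma wp3 : wp 3 = pref 5 := by
  rw [wp_r 2 (by omega), wp2, app_true u4, base3]
lemma wp4 : wp 4 = pref 10 := by
  rw [wp_r 3 (by omega), wp3, app_true u5, base4]

lemma wp_all (k : ℕ) : wp (4*k+4) = pref (sA k + 1) ∧ wp (4*k+5) = pref (sB k + 1) ∧
    wp (4*k+6) = pref (sC k + 1) ∧ wp (4*k+7) = pref (sE k + 1) := by
  have main : ∀ k, wp (4*k+4) = pref (sA k + 1) → wp (4*k+5) = pref (sB k + 1) ∧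
    wp (4*k+6) = pref (sC k + 1) ∧ wp (4*k+7) = pref (sE k + 1) ∧
    wp (4*k+8) = pref (sA (k+1) + 1) := by
    intro k h
    have h1 : wp (4*k+5) = pref (sB k + 1) := by
      rw [wp_e (4*k+4) (by omega), h, app_true (uA1 k), stepB]
    have h2 : wp (4*k+6) = pref (sC k + 1) := by
      rw [wp_e (4*k+5) (by omega), h1, app_true (uB1 k), stepC]
    have h3 : wp (4*k+7) = pref (sE k + 1) := by
      rw [wp_r (4*k+6) (by omega), h2, app_true (uC1 k), stepE]
    have h4 : wp (4*k+8) = pref (sA (k+1) + 1) := by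
      rw [wp_r (4*k+7) (by omega), h3, app_true (uE1 k), stepA]
    exact ⟨h1, h2, h3, h4⟩
  induction k with
  | zero => have := main 0 wp4; exact ⟨wp4, this.1, this.2.1, this.2.2.1⟩
  | succ k ih =>
    have h1 := (main k ih.1).2.2.2
    have h2 := main (k+1) h1
    exact ⟨h1, h2.1, h2.2.1, h2.2.2.1⟩

lemma wp_pref (n : ℕ) : ∃ m, wp n = pref m := by
  by_cases h : n < 4
  · interval_cases n
    · exact ⟨_, wp0⟩
    · exact ⟨_, wp1⟩
    · exact ⟨_, wp2⟩
    · exact ⟨_, wp3⟩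
  · have h1 := wp_all (n / 4 - 1)
    have : n = 4 * (n/4-1) + 4 ∨ n = 4 * (n/4-1) + 5 ∨ n = 4 * (n/4-1) + 6 ∨
      n = 4 * (n/4-1) + 7 := by omega
    rcases this with h | h | h | h <;> rw [h]
    · exact ⟨_, h1.1⟩
    · exact ⟨_, h1.2.1⟩
    · exact ⟨_, h1.2.2.1⟩
    · exact ⟨_, h1.2.2.2⟩

/-- windows -/
def win (f : ℕ → Bool) (n i : ℕ) : Fin n → Bool := fun t => f (i + t)
def Fs (f : ℕ → Bool) (n : ℕ) : Set (Fin n → Bool) := Set.range (win f n)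

lemma factor_iff (n : ℕ) : {v : Word | FactorUp v ∧ v.length = n} = List.ofFn '' Fs u n := by
  ext v
  constructor
  · rintro ⟨⟨N, hN⟩, rfl⟩
    obtain ⟨m, hm⟩ := wp_pref N
    rw [hm] at hN
    obtain ⟨s, t, hst⟩ := hN
    refine ⟨_, ⟨s.length, rfl⟩, ?_⟩
    apply List.ext_getElem (by simp)
    intro i h1 h2
    have hl : s.length + v.length + t.length = m := by
      have := congrArg List.length hst
      rw [pref_len] at this; simp only [List.length_append] at this; omega
    have e : (pref m)[s.length + i]? = v[i]? := by
      rw [← hst, List.append_assoc, List.getElem?_append_right (by omega),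
        List.getElem?_append_left (by omega)]
      congr 1; omega
    rw [pref_get (by omega), List.getElem?_eq_getElem h2] at e
    simp only [List.getElem_ofFn, win]
    simpa using e
  · rintro ⟨w, ⟨i, rfl⟩, rfl⟩
    refine ⟨⟨4 * (i + n) + 4, ?_⟩, by simp⟩
    rw [(wp_all (i+n)).1]
    have hge := sA_ge (i+n)
    refine ⟨pref i, (pref (sA (i+n) + 1)).drop (i + n), ?_⟩
    have : pref i ++ List.ofFn (win u n i) = pref (i + n) := by
      apply List.ext_getElem?
      intro j
      by_cases h1 : j < i
      · rw [List.getElem?_append_left (by rw [pref_len]; exact h1), pref_get h1,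
          pref_get (by omega)]
      · by_cases h2 : j < i + n
        · rw [List.getElem?_append_right (by rw [pref_len]; omega), pref_get h2, pref_len,
            List.getElem?_eq_getElem (by simp; omega)]
          simp only [List.getElem_ofFn, win]
          congr 2; omega
        · rw [List.getElem?_eq_none (by simp [pref_len]; omega),
            List.getElem?_eq_none (by rw [pref_len]; omega)]
    rw [this]
    have h3 := pref_prefix (m := i + n) (n := sA (i+n) + 1) (by omega)
    have h4 := List.prefix_iff_eq_take.1 h3
    rw [pref_len] at h4
    conv_lhs => rw [h4]
    exact List.take_append_drop _ _

lemma Cp_eq (n : ℕ) : Cp n = (Fs u n).ncard := by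
  rw [Cp, factor_iff, Set.ncard_image_of_injective _ List.ofFn_injective]
def phi (n : ℕ) (v : Fin (n+1) → Bool) : Bool × (Fin n → Bool) :=
  (v 0, fun t => xor (v t.castSucc) (v t.succ))

lemma phi_inj (n : ℕ) : Function.Injective (phi n) := by
  intro v w h
  have h0 : v 0 = w 0 := congrArg Prod.fst h
  have h1 : ∀ t : Fin n, xor (v t.castSucc) (v t.succ) = xor (w t.castSucc) (w t.succ) :=
    fun t => congrFun (congrArg Prod.snd h) t
  funext t
  induction t using Fin.induction with
  | zero => exact h0
  | succ t ih =>
    have := h1 t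
    rw [ih] at this
    revert this
    cases w t.castSucc <;> cases v t.succ <;> cases w t.succ <;> simp

lemma phi_win (n i : ℕ) : phi n (win u (n+1) i) = (u i, win d n i) := by
  refine Prod.ext ?_ ?_
  · simp [phi, win]
  · funext t
    simp only [phi, win, Fin.val_castSucc, Fin.val_succ]
    rw [d_eq]; rfl

lemma u_compl (k i : ℕ) (hi : i ≤ sA k) : u (sA k + 3 + i) = !(u i) := by
  induction i with
  | zero =>
    have h2 : u (sA k + 2) = false := by rw [u_succ, uA1, dA1]; rfl
    have h3 : u (sA k + 3) = false := by rw [u_succ, h2, dA2]; rfl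
    simp [h3, u0]
  | succ i ih =>
    rw [← add_assoc, u_succ, u_succ, ih (by omega), F1 k i (by omega)]
    cases u i <;> cases d i <;> rfl

lemma exists_pos (b : Bool) (n i : ℕ) : ∃ i', u i' = b ∧ win d n i' = win d n i := by
  by_cases h : u i = b
  · exact ⟨i, h, rfl⟩
  · have hge := sA_ge (i + n)
    refine ⟨sA (i+n) + 3 + i, ?_, ?_⟩
    · rw [u_compl _ _ (by omega)]
      revert h; cases u i <;> cases b <;> simp
    · funext t
      simp only [win]
      rw [add_assoc (sA (i+n) + 3), F1 _ _ (by omega)]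

noncomputable def Cd (n : ℕ) : ℕ := (Fs d n).ncard

lemma Cp_ge (n : ℕ) : 2 * Cd n ≤ Cp (n+1) := by
  have h1 : (Set.univ : Set Bool) ×ˢ Fs d n ⊆ phi n '' Fs u (n+1) := by
    rintro ⟨b, w⟩ ⟨-, ⟨i, rfl⟩⟩
    obtain ⟨i', h1, h2⟩ := exists_pos b n i
    refine ⟨_, ⟨i', rfl⟩, ?_⟩
    rw [phi_win, h1, h2]
  have h2 := Set.ncard_le_ncard h1 (Set.toFinite _)
  rw [Set.ncard_image_of_injective _ (phi_inj n), Set.ncard_prod, Set.ncard_univ] at h2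
  simpa [Cp_eq, Cd] using h2

lemma Cp_le (n : ℕ) : Cp (n+1) ≤ 2 * Cd n := by
  have h1 : phi n '' Fs u (n+1) ⊆ (Set.univ : Set Bool) ×ˢ Fs d n := by
    rintro _ ⟨_, ⟨i, rfl⟩, rfl⟩
    rw [phi_win]
    exact ⟨trivial, ⟨i, rfl⟩⟩
  have h2 := Set.ncard_le_ncard h1 (Set.toFinite _)
  rw [Set.ncard_image_of_injective _ (phi_inj n), Set.ncard_prod, Set.ncard_univ] at h2
  simpa [Cp_eq, Cd] using h2

/-- every window of length at most `sA k` occurs inside the prefix of length `sE k` -/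
lemma reloc (k n : ℕ) (hn : n ≤ sA k) : ∀ i, ∃ i', i' < sE k ∧ win d n i = win d n i' := by
  intro i
  induction i using Nat.strong_induction_on with
  | _ i ih =>
  have hrk := rel k
  by_cases h : i + n ≤ sE k
  · by_cases hi : i < sE k
    · exact ⟨i, hi, rfl⟩
    · refine ⟨0, by omega, ?_⟩
      funext t; have := t.2; omega
  have go : ∀ i', i' < i → (∀ t, t < n → d (i + t) = d (i' + t)) →
      ∃ i', i' < sE k ∧ win d n i = win d n i' := by
    intro i' h1 h2
    obtain ⟨i'', h3, h4⟩ := ih i' h1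
    refine ⟨i'', h3, ?_⟩
    rw [← h4]; funext t; exact h2 t t.2
  obtain ⟨j, hj1, hj2⟩ := locate (i + n) (by omega)
  have hrj := rel j
  have hkj : k ≤ j := by
    by_contra hlt
    have : sA (j+1) ≤ sA k := sA_mono (by omega)
    omega
  have hmono := sA_mono hkj
  by_cases hEj : sE j < i + n
  · -- overlap of length sA j
    by_cases hi : sE j - sA j ≤ i
    · apply go (i - (sE j - sA j)) (by omega)
      intro t ht
      rw [← S4 j (i - (sE j - sA j) + t) (by omega)]
      congr 1; omega
    · omega
  have hkj' : sA (k+1) ≤ sA j := by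
    apply sA_mono
    by_contra hlt
    have : j = k := by omega
    subst this; omega
  by_cases hCj : sC j < i + n
  · by_cases hi : sC j - 2 ≤ i
    · apply go (i - (sC j - 2)) (by omega)
      intro t ht
      rw [← S3 j (i - (sC j - 2) + t) (by omega)]
      congr 1; omega
    · -- crossing: move into sE k
      have hCk : sA (k+1) ≤ sC j := by omega
      apply go (i - (sC j - sC k)) (by omega)
      intro t ht
      by_cases h1 : i + t < sC j
      · rw [palC j (i + t) (sC j - 1 - (i + t)) (by omega),
          palC k (i - (sC j - sC k) + t) (sC j - 1 - (i + t)) (by omega)]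
      · have e1 := F3 j (i + t - sC j) (by omega)
        have e2 := F3 k (i + t - sC j) (by omega)
        rw [show sC j + (i + t - sC j) = i + t by omega] at e1
        rw [show sC k + (i + t - sC j) = i - (sC j - sC k) + t by omega] at e2
        rw [e1, e2]
  have hP : sC k ≤ sP j := by
    cases j with
    | zero => rw [sA0] at hkj'; have := basic (k+1); have := rel k; omega
    | succ j =>
      rw [sP_succ]
      have hrj' := rel j
      rcases tri j k with h | rfl | h <;> omega
  by_cases hBj : sB j < i + n
  · apply go (i - (sB j - sP j)) (by omega)
    intro t ht
    rw [← S2 j (i - (sB j - sP j) + t) (by omega)]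
    congr 1; omega
  · by_cases hi : sA j + 3 ≤ i
    · apply go (i - (sA j + 3)) (by omega)
      intro t ht
      rw [← F1 j (i - (sA j + 3) + t) (by omega)]
      congr 1; omega
    · apply go (i - (sA j - sA k)) (by omega)
      intro t ht
      by_cases h1 : i + t < sA j
      · rw [palA j (i + t) (sA j - 1 - (i + t)) (by omega),
          palA k (i - (sA j - sA k) + t) (sA j - 1 - (i + t)) (by omega)]
      · by_cases h2 : i + t < sA j + 3
        · have e1 := F1a j (i + t - sA j) (by omega)
          have e2 := F1a k (i + t - sA j) (by omega)
          rw [show sA j + (i + t - sA j) = i + t by omega] at e1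
          rw [show sA k + (i + t - sA j) = i - (sA j - sA k) + t by omega] at e2
          rw [e1, e2]
        · have e1 := F1 j (i + t - (sA j + 3)) (by omega)
          have e2 := F1 k (i + t - (sA j + 3)) (by omega)
          rw [show sA j + 3 + (i + t - (sA j + 3)) = i + t by omega] at e1
          rw [show sA k + 3 + (i + t - (sA j + 3)) = i - (sA j - sA k) + t by omega] at e2
          rw [e1, e2]

lemma Cd_le_sE (k n : ℕ) (hn : n ≤ sA k) : Cd n ≤ sE k := by
  have h : Fs d n ⊆ ((Finset.range (sE k)).image (win d n) : Finset (Fin n → Bool)) := by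
    rintro _ ⟨i, rfl⟩
    obtain ⟨i', h1, h2⟩ := reloc k n hn i
    simp only [Finset.coe_image, Set.mem_image, Finset.coe_range, Set.mem_Iio]
    exact ⟨i', h1, h2.symm⟩
  have h2 := Set.ncard_le_ncard h (Set.toFinite _)
  rw [Set.ncard_coe_finset] at h2
  exact h2.trans (Finset.card_image_le.trans (by simp))

lemma Cd_lin (n : ℕ) : Cd n ≤ 200 * n + 100 := by
  by_cases h : n ≤ 9
  · have := Cd_le_sE 0 n (by rw [sA0]; exact h)
    have h2 : sE 0 = 76 := rfl
    omega
  · obtain ⟨k, h1, h2⟩ := locate n (by omega)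
    have := Cd_le_sE (k+1) n h2
    have := rel k
    have := rel (k+1)
    omega

lemma Cp_lin (n : ℕ) : Cp (n+1) ≤ 400 * (n+1) := by
  have := Cp_le n
  have := Cd_lin n
  omega

/-- word at position `y` of length `m` is left special -/
def LS (m y : ℕ) : Prop := ∃ x, 1 ≤ x ∧ 1 ≤ y ∧ d (x - 1) ≠ d (y - 1) ∧
  ∀ t, t < m → d (x + t) = d (y + t)

lemma LS.mono {m m' y : ℕ} (h : LS m y) (hm : m' ≤ m) : LS m' y := by
  obtain ⟨x, h1, h2, h3, h4⟩ := h
  exact ⟨x, h1, h2, h3, fun t ht => h4 t (by omega)⟩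

lemma win_cons (m y : ℕ) (hy : 1 ≤ y) :
    win d (m+1) (y-1) = Fin.cons (α := fun _ => Bool) (d (y-1)) (win d m y) := by
  funext t
  refine Fin.cases ?_ (fun t => ?_) t
  · simp [win]
  · simp only [win, Fin.val_succ, Fin.cons_succ]
    congr 1; omega

lemma LS.mem {m y : ℕ} (h : LS m y) (b : Bool) :
    Fin.cons (α := fun _ => Bool) b (win d m y) ∈ Fs d (m+1) := by
  obtain ⟨x, h1, h2, h3, h4⟩ := h
  have e : win d m x = win d m y := by funext t; exact h4 t t.2
  by_cases hb : d (y-1) = b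
  · exact ⟨y - 1, by rw [win_cons m y h2, hb]⟩
  · have : d (x-1) = b := by
      revert h3 hb; cases d (x-1) <;> cases d (y-1) <;> cases b <;> simp
    exact ⟨x - 1, by rw [win_cons m x h1, this, e]⟩

lemma left_ext (m i : ℕ) : ∃ b, Fin.cons (α := fun _ => Bool) b (win d m i) ∈ Fs d (m+1) := by
  obtain ⟨i', h1, h2⟩ : ∃ i', 1 ≤ i' ∧ win d m i' = win d m i := by
    have hge := sA_ge (i + m)
    refine ⟨sA (i+m) + 3 + i, by omega, ?_⟩
    funext t
    simp only [win]
    rw [add_assoc (sA (i+m) + 3), F1 _ _ (by omega)]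
  exact ⟨d (i'-1), i'-1, by rw [win_cons m i' h1, h2]⟩

lemma Cd_step (m : ℕ) (T : Finset (Fin m → Bool)) (hT : ∀ w ∈ T, ∃ y, LS m y ∧ win d m y = w) :
    Cd m + T.card ≤ Cd (m+1) := by
  classical
  have hex : ∀ w : Fin m → Bool, ∃ b, w ∈ Fs d m →
      Fin.cons (α := fun _ => Bool) b w ∈ Fs d (m+1) := by
    intro w
    by_cases h : w ∈ Fs d m
    · obtain ⟨i, rfl⟩ := h
      obtain ⟨b, hb⟩ := left_ext m i
      exact ⟨b, fun _ => hb⟩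
    · exact ⟨true, fun h' => absurd h' h⟩
  choose g hg using hex
  let f1 : (Fin m → Bool) → (Fin (m+1) → Bool) := fun w => Fin.cons (α := fun _ => Bool) (g w) w
  let f2 : (Fin m → Bool) → (Fin (m+1) → Bool) := fun w => Fin.cons (α := fun _ => Bool) (!(g w)) w
  have i1 : Function.Injective f1 := fun a b h => (Fin.cons_inj.1 h).2
  have i2 : Function.Injective f2 := fun a b h => (Fin.cons_inj.1 h).2
  have hsub : f1 '' Fs d m ∪ f2 '' (T : Set (Fin m → Bool)) ⊆ Fs d (m+1) := by
    rintro _ (⟨w, hw, rfl⟩ | ⟨w, hw, rfl⟩)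
    · exact hg w hw
    · obtain ⟨y, hy, rfl⟩ := hT w hw
      exact hy.mem _
  have hdisj : Disjoint (f1 '' Fs d m) (f2 '' (T : Set (Fin m → Bool))) := by
    rw [Set.disjoint_left]
    rintro _ ⟨w, hw, rfl⟩ ⟨w', hw', h⟩
    have := Fin.cons_inj.1 h
    have h1 := this.2
    subst h1
    simpa using this.1
  have h := Set.ncard_le_ncard hsub (Set.toFinite _)
  rw [Set.ncard_union_eq hdisj (Set.toFinite _) (Set.toFinite _),
    Set.ncard_image_of_injective _ i1, Set.ncard_image_of_injective _ i2,
    Set.ncard_coe_finset] at h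
  exact h

lemma Cd_two {m y1 y2 : ℕ} (h1 : LS m y1) (h2 : LS m y2) (h12 : win d m y1 ≠ win d m y2) :
    Cd m + 2 ≤ Cd (m+1) := by
  classical
  have := Cd_step m {win d m y1, win d m y2} (by
    intro w hw
    simp only [Finset.mem_insert, Finset.mem_singleton] at hw
    rcases hw with rfl | rfl
    · exact ⟨_, h1, rfl⟩
    · exact ⟨_, h2, rfl⟩)
  rwa [Finset.card_pair h12] at this

lemma Cd_three {m y1 y2 y3 : ℕ} (h1 : LS m y1) (h2 : LS m y2) (h3 : LS m y3)
    (h12 : win d m y1 ≠ win d m y2) (h13 : win d m y1 ≠ win d m y3)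
    (h23 : win d m y2 ≠ win d m y3) :
    Cd m + 3 ≤ Cd (m+1) := by
  classical
  have := Cd_step m {win d m y1, win d m y2, win d m y3} (by
    intro w hw
    simp only [Finset.mem_insert, Finset.mem_singleton] at hw
    rcases hw with rfl | rfl | rfl
    · exact ⟨_, h1, rfl⟩
    · exact ⟨_, h2, rfl⟩
    · exact ⟨_, h3, rfl⟩)
  rwa [Finset.card_eq_three.2 ⟨_, _, _, h12, h13, h23, rfl⟩] at this
lemma LS_pre (m : ℕ) : LS m (sA m + 3) ∧ ∀ t, t < m → d (sA m + 3 + t) = d t := by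
  have hr := rel m
  have hg := sA_ge m
  have hp : ∀ t, t < m → d (sA m + 3 + t) = d t := fun t ht => F1 m t (by omega)
  refine ⟨⟨sB m - sP m, by omega, by omega, ?_, ?_⟩, hp⟩
  · rw [palB m (sB m - sP m - 1) (sP m) (by omega), dP, show sA m + 3 - 1 = sA m + 2 by omega, dA2]
    simp
  · intro t ht
    rw [hp t ht, S2 m t (by omega)]

lemma Z_pre (k t : ℕ) (ht : t < sB k) : d (sA (k+1) - sA k + t) = d t := by
  have hr := rel k
  have hr' := rel (k+1)
  by_cases h : t < sA k
  · rw [palA (k+1) (sA (k+1) - sA k + t) (sA k - 1 - t) (by omega)]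
    exact palA k _ _ (by omega)
  · obtain ⟨r, rfl⟩ : ∃ r, t = sA k + r := ⟨t - sA k, by omega⟩
    rw [show sA (k+1) - sA k + (sA k + r) = sA (k+1) + r by omega]
    by_cases h3 : r < 3
    · rw [F1a _ _ h3, F1a _ _ h3]
    · obtain ⟨s, rfl⟩ : ∃ s, r = 3 + s := ⟨r - 3, by omega⟩
      rw [← add_assoc, ← add_assoc, F1 _ _ (by omega), F1 _ _ (by omega)]

lemma Z_diff (k : ℕ) : d (sA (k+1) - sA k + sB k) ≠ d (sB k) := by
  have hr := rel k
  have hr' := rel (k+1)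
  rw [show sA (k+1) - sA k + sB k = sA (k+1) + 3 + sA k by omega, F1 _ _ (by omega), dA, dB]
  simp

lemma LS_Z (k : ℕ) : LS (sB k + 3 + sE k) (sA (k+1) - sA k) := by
  have hr := rel k
  have hr' := rel (k+1)
  refine ⟨sE k - sB k, by omega, by omega, ?_, ?_⟩
  · rw [palE k (sE k - sB k - 1) (sB k) (by omega), dB,
      palA (k+1) (sA (k+1) - sA k - 1) (sA k) (by omega), dA]
    simp
  · intro t ht
    by_cases h : t < sB k
    · rw [Z_pre k t h, palE k (sE k - sB k + t) (sB k - 1 - t) (by omega)]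
      exact palB k _ _ (by omega)
    · obtain ⟨s, rfl⟩ : ∃ s, t = sA k + 3 + s := ⟨t - (sA k + 3), by omega⟩
      rw [show sA (k+1) - sA k + (sA k + 3 + s) = sA (k+1) + 3 + s by omega, F1 _ _ (by omega),
        show sE k - sB k + (sA k + 3 + s) = sE k - sA k + s by omega]
      by_cases hs : s < sE k
      · exact S4 k s hs
      · obtain ⟨r, rfl⟩ : ∃ r, s = sE k + r := ⟨s - sE k, by omega⟩
        rw [F4 k r (by omega), show sE k - sA k + (sE k + r) = sA (k+1) + r by omega]
        by_cases h3 : r < 3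
        · rw [F1a _ _ h3, F1a _ _ h3]
        · obtain ⟨q, rfl⟩ : ∃ q, r = 3 + q := ⟨r - 3, by omega⟩
          rw [← add_assoc, ← add_assoc, F1 _ _ (by omega), F1 _ _ (by omega)]

lemma Y_pre (k t : ℕ) (ht : t < sE k) : d (sC (k+1) - sC k + t) = d t := by
  have hr := rel k
  have hr' := rel (k+1)
  have hp := sP_succ k
  by_cases h : t < sC k
  · rw [palC (k+1) (sC (k+1) - sC k + t) (sC k - 1 - t) (by omega)]
    exact palC k _ _ (by omega)
  · obtain ⟨r, rfl⟩ : ∃ r, t = sC k - 2 + r := ⟨t - (sC k - 2), by omega⟩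
    rw [show sC (k+1) - sC k + (sC k - 2 + r) = sC (k+1) - 2 + r by omega, S3 _ _ (by omega),
      S3 _ _ (by omega)]

lemma Y_diff (k : ℕ) : d (sC (k+1) - sC k + sE k) ≠ d (sE k) := by
  have hr := rel k
  have hr' := rel (k+1)
  have hp := sP_succ k
  rw [show sC (k+1) - sC k + sE k = sC (k+1) - 2 + sC k by omega, S3 _ _ (by omega), dC, dE]
  simp

lemma LS_Y (k : ℕ) : LS (sB (k+1) + sE k - 2) (sC (k+1) - sC k) := by
  have hr := rel k
  have hr' := rel (k+1)
  have hp := sP_succ k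
  refine ⟨sB (k+1) - sE k, by omega, by omega, ?_, ?_⟩
  · rw [palB (k+1) (sB (k+1) - sE k - 1) (sE k) (by omega), dE,
      palC (k+1) (sC (k+1) - sC k - 1) (sC k) (by omega), dC]
    simp
  · intro t ht
    by_cases h : t < sE k
    · rw [Y_pre k t h, palB (k+1) (sB (k+1) - sE k + t) (sE k - 1 - t) (by omega)]
      exact palE k _ _ (by omega)
    · obtain ⟨s, rfl⟩ : ∃ s, t = sC k - 2 + s := ⟨t - (sC k - 2), by omega⟩
      rw [show sC (k+1) - sC k + (sC k - 2 + s) = sC (k+1) - 2 + s by omega, S3 _ _ (by omega),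
        show sB (k+1) - sE k + (sC k - 2 + s) = sB (k+1) - sP (k+1) + s by omega]
      by_cases hs : s < sB (k+1)
      · exact S2 _ s hs
      · obtain ⟨r, rfl⟩ : ∃ r, s = sB (k+1) + r := ⟨s - sB (k+1), by omega⟩
        rw [F2 (k+1) r (by omega), show sB (k+1) - sP (k+1) + (sB (k+1) + r) = sC (k+1) + r by omega,
          F3 (k+1) r (by omega), sP_succ, F3 k r (by omega)]

lemma win_ne {m y1 y2 : ℕ} (t : ℕ) (ht : t < m) (h : d (y1 + t) ≠ d (y2 + t)) :
    win d m y1 ≠ win d m y2 := fun he => h (congrFun he ⟨t, ht⟩)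

lemma win_PZ {k m : ℕ} (h : sB k < m) : win d m (sA m + 3) ≠ win d m (sA (k+1) - sA k) :=
  win_ne (sB k) h (by rw [(LS_pre m).2 _ h]; exact (Z_diff k).symm)

lemma win_PY {k m : ℕ} (h : sE k < m) : win d m (sA m + 3) ≠ win d m (sC (k+1) - sC k) :=
  win_ne (sE k) h (by rw [(LS_pre m).2 _ h]; exact (Y_diff k).symm)

lemma step1 {k m : ℕ} (h1 : sB k < m) (h2 : m ≤ sE k) : Cd m + 2 ≤ Cd (m+1) :=
  Cd_two (LS_pre m).1 ((LS_Z k).mono (by omega)) (win_PZ h1)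

lemma step2 {k m : ℕ} (h1 : sE k < m) (h2 : m ≤ sB k + 3 + sE k) : Cd m + 3 ≤ Cd (m+1) := by
  have hr := rel k
  have hr' := rel (k+1)
  refine Cd_three (LS_pre m).1 ((LS_Z k).mono (by omega)) ((LS_Y k).mono (by omega))
    (win_PZ (by omega)) (win_PY h1) (win_ne (sB k) (by omega) ?_)
  rw [Y_pre k _ (by omega)]; exact Z_diff k

lemma step3 {k m : ℕ} (h1 : sE k < m) (h2 : m ≤ sB (k+1)) : Cd m + 2 ≤ Cd (m+1) := by
  have hr := rel k
  exact Cd_two (LS_pre m).1 ((LS_Y k).mono (by omega)) (win_PY h1)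

lemma step4 {k m : ℕ} (h1 : sB (k+1) < m) (h2 : m ≤ sB (k+1) + sE k - 2) :
    Cd m + 3 ≤ Cd (m+1) := by
  have hr := rel k
  have hr' := rel (k+1)
  refine Cd_three (LS_pre m).1 ((LS_Y k).mono (by omega)) ((LS_Z (k+1)).mono (by omega))
    (win_PY (by omega)) (win_PZ h1) (win_ne (sE k) (by omega) ?_)
  rw [Z_pre (k+1) _ (by omega)]; exact Y_diff k

lemma run (c a : ℕ) (n : ℕ) (h : ∀ m, a ≤ m → m < a + n → Cd m + c ≤ Cd (m+1)) :
    Cd a + c * n ≤ Cd (a + n) := by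
  induction n with
  | zero => simp
  | succ n ih =>
    have h1 := ih (fun m hm hm' => h m hm (by omega))
    have h2 := h (a + n) (by omega) (by omega)
    rw [← add_assoc, Nat.mul_succ]; omega

lemma run' (c a b : ℕ) (hab : a ≤ b) (h : ∀ m, a ≤ m → m < b → Cd m + c ≤ Cd (m+1)) :
    Cd a + c * (b - a) ≤ Cd b := by
  have := run c a (b - a) (fun m hm hm' => h m hm (by omega))
  rwa [Nat.add_sub_cancel' hab] at this

def N (k : ℕ) : ℕ := sB (k+1) + sE k - 1

lemma N_step (k : ℕ) : 2 * Cd (N k) + 4 * (N (k+1) - N k) + 2 * (sB (k+1) + 3 + (sE (k+1) - 2))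
    ≤ 2 * Cd (N (k+1)) := by
  have hr := rel k
  have hr' := rel (k+1)
  have hr2 := rel (k+1+1)
  have hp := sP_succ k
  have hp2 := sP_succ (k+1)
  have e1 := run' 2 (N k) (sE (k+1) + 1) (by unfold N; omega)
    (fun m h1 h2 => step1 (k := k+1) (by unfold N at h1; omega) (by omega))
  have e2 := run' 3 (sE (k+1) + 1) (sB (k+1) + 3 + sE (k+1) + 1) (by omega)
    (fun m h1 h2 => step2 (k := k+1) (by omega) (by omega))
  have e3 := run' 2 (sB (k+1) + 3 + sE (k+1) + 1) (sB (k+1+1) + 1) (by omega)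
    (fun m h1 h2 => step3 (k := k+1) (by omega) (by omega))
  have e4 := run' 3 (sB (k+1+1) + 1) (N (k+1)) (by unfold N; omega)
    (fun m h1 h2 => step4 (k := k+1) (by omega) (by unfold N at h2; omega))
  unfold N at *
  omega

lemma N_inv (k : ℕ) : (4 * (N k : ℤ) + (sB (k+1) - sE k) - 2000) ≤ 2 * (Cd (N k) : ℤ) := by
  induction k with
  | zero =>
    have : N 0 ≤ 400 := by decide
    have : sB 1 ≤ 300 := by decide
    have := rel 0
    push_cast
    omega
  | succ k ih =>
    have hs := N_step k
    have hr := rel k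
    have hr' := rel (k+1)
    have hr2 := rel (k+1+1)
    have hp := sP_succ k
    have hp2 := sP_succ (k+1)
    unfold N at *
    omega

lemma ratio (k : ℕ) : -10 ≤ (sB (k+1) : ℝ) - (2 + Real.sqrt 3) * sE k := by
  have hs : Real.sqrt 3 ^ 2 = 3 := Real.sq_sqrt (by norm_num)
  have hs1 : 1.7 ≤ Real.sqrt 3 := Real.le_sqrt_of_sq_le (by norm_num)
  have hs2 : Real.sqrt 3 ≤ 1.7321 := Real.sqrt_le_iff.2 (by norm_num)
  induction k with
  | zero =>
    have e1 : sB 1 = 289 := by decide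
    have e2 : sE 0 = 76 := by decide
    rw [e1, e2]; norm_num; linarith
  | succ k ih =>
    have hr := rel k
    have hr' := rel (k+1)
    have hr2 := rel (k+1+1)
    have hp := sP_succ k
    have e1 : (sE (k+1) : ℝ) = 4 * sB (k+1) - sE k - 4 := by
      have : sE (k+1) + sE k + 4 = 4 * sB (k+1) := by omega
      have : (sE (k+1) : ℝ) + sE k + 4 = 4 * sB (k+1) := by exact_mod_cast this
      linarith
    have e2 : (sB (k+1+1) : ℝ) = 4 * sE (k+1) + 6 - sB (k+1) := by
      have : sB (k+1+1) + sB (k+1) = 4 * sE (k+1) + 6 := by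
        omega
      have : (sB (k+1+1) : ℝ) + sB (k+1) = 4 * sE (k+1) + 6 := by exact_mod_cast this
      linarith
    have key : (sB (k+1+1) : ℝ) - (2 + Real.sqrt 3) * sE (k+1) =
        (2 - Real.sqrt 3) * ((2 - Real.sqrt 3) * ((sB (k+1) : ℝ) - (2 + Real.sqrt 3) * sE k) - 4) + 6 := by
      rw [e2, e1]
      generalize Real.sqrt 3 = s at *
      linear_combination (-(sB (k+1) : ℝ) + (s - 2) * sE k) * hs
    rw [key]
    nlinarith [mul_le_mul_of_nonneg_left ih (sq_nonneg (2 - Real.sqrt 3))]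

lemma Cp_real (k : ℕ) : (4 + Real.sqrt 3 / 3) * ((N k + 1 : ℕ) : ℝ) - 2020 ≤ Cp (N k + 1) := by
  have h1 := Cp_ge (N k)
  have h2 := N_inv k
  have h3 := ratio k
  have hr := rel k
  have hM : N k + 1 = sB (k+1) + sE k := by unfold N; omega
  have h4 : (4 * ((N k + 1 : ℕ) : ℤ) + (sB (k+1) - sE k) - 2004) ≤ (Cp (N k + 1) : ℤ) := by
    push_cast; omega
  have h5 : (4 * ((N k + 1 : ℕ) : ℝ) + (sB (k+1) - sE k) - 2004) ≤ (Cp (N k + 1) : ℝ) := by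
    exact_mod_cast h4
  have h6 : ((N k + 1 : ℕ) : ℝ) = sB (k+1) + sE k := by rw [hM]; push_cast; ring
  have hs : Real.sqrt 3 ^ 2 = 3 := Real.sq_sqrt (by norm_num)
  have hs1 : 1.7 ≤ Real.sqrt 3 := Real.le_sqrt_of_sq_le (by norm_num)
  have hs2 : Real.sqrt 3 ≤ 1.7321 := Real.sqrt_le_iff.2 (by norm_num)
  have h7 : ((sB (k+1) : ℝ) - sE k) - Real.sqrt 3 / 3 * (sB (k+1) + sE k) =
      (1 - Real.sqrt 3 / 3) * ((sB (k+1) : ℝ) - (2 + Real.sqrt 3) * sE k) := by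
    linear_combination (-(1/3) * (sE k : ℝ)) * hs
  have h8 : -10 ≤ (1 - Real.sqrt 3 / 3) * ((sB (k+1) : ℝ) - (2 + Real.sqrt 3) * sE k) := by
    nlinarith
  rw [h6] at h5 ⊢
  linarith

lemma N_ge (k : ℕ) : k ≤ N k := by
  have hr := rel k
  have := sA_ge k
  unfold N; omega

lemma limsup_ge : 4 + Real.sqrt 3 / 3 ≤ Filter.atTop.limsup (fun n : ℕ => (Cp n : ℝ) / n) := by
  refine le_of_forall_pos_sub_le (fun ε hε => ?_)
  apply Filter.le_limsup_of_frequently_le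
  · rw [Filter.frequently_atTop]
    intro a
    obtain ⟨K, hK⟩ := exists_nat_gt (2020 / ε)
    refine ⟨N (a + K) + 1, by have := N_ge (a+K); omega, ?_⟩
    have hpos : (0 : ℝ) < ((N (a + K) + 1 : ℕ) : ℝ) := by exact_mod_cast Nat.succ_pos _
    rw [le_div_iff₀ hpos]
    have h1 := Cp_real (a + K)
    have h2 : (K : ℝ) ≤ ((N (a + K) + 1 : ℕ) : ℝ) := by
      exact_mod_cast (by have := N_ge (a+K); omega : K ≤ N (a+K) + 1)
    have h3 : 2020 < K * ε := (div_lt_iff₀ hε).1 hK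
    nlinarith
  · refine Filter.isBoundedUnder_of ⟨400, fun n => ?_⟩
    cases n with
    | zero => simp
    | succ n =>
      have hpos : (0 : ℝ) < ((n + 1 : ℕ) : ℝ) := by exact_mod_cast Nat.succ_pos _
      rw [div_le_iff₀ hpos]
      exact_mod_cast Cp_lin n

end UP

open Filter

/-- `limsup C(n)/n ≥ 4 + ((τ'+5)/(τ+5))·(2τ/(τ-1))` where `τ = 7+4√3`,
`τ' = 7-4√3`; in particular `limsup C(n)/n ≥ 4.577`. -/
theorem limsup_complexity_lower_bound :
    (4 + ((7 - 4 * Real.sqrt 3 + 5) / (7 + 4 * Real.sqrt 3 + 5))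
        * (2 * (7 + 4 * Real.sqrt 3) / (7 + 4 * Real.sqrt 3 - 1)) : ℝ)
      ≤ Filter.atTop.limsup (fun n : ℕ => (Cp n : ℝ) / n) ∧
    (4.577 : ℝ) ≤ Filter.atTop.limsup (fun n : ℕ => (Cp n : ℝ) / n) := by
  have h := UP.limsup_ge
  have hs : Real.sqrt 3 ^ 2 = 3 := Real.sq_sqrt (by norm_num)
  have hs1 : 1.732 ≤ Real.sqrt 3 := Real.le_sqrt_of_sq_le (by norm_num)
  have e : (4 + ((7 - 4 * Real.sqrt 3 + 5) / (7 + 4 * Real.sqrt 3 + 5))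
        * (2 * (7 + 4 * Real.sqrt 3) / (7 + 4 * Real.sqrt 3 - 1)) : ℝ) = 4 + Real.sqrt 3 / 3 := by
    have h1 : 7 + 4 * Real.sqrt 3 + 5 ≠ 0 := by positivity
    have h2 : 7 + 4 * Real.sqrt 3 - 1 ≠ 0 := by linarith
    congr 1
    rw [div_mul_div_comm, div_eq_div_iff (mul_ne_zero h1 h2) (by norm_num)]
    generalize Real.sqrt 3 = s at *
    nlinarith
  rw [e]
  exact ⟨h, le_trans (by linarith) h⟩
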